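/- arXiv:0906.2479 — 4 statements merged into one kernel-verified Lean document; each statement's English description precedes it below -/
import Mathlib

section
/- Let (C, ⊗, I) be a monoidal category and let C, D be objects of C such that C ⊗ D is a semisimple object. If D has a strong right dual (i.e. there exists an object D* and a split monomorphism i_D : I → D ⊗ D*) and the functor − ⊗ D : C → C preserves monomorphisms, then C is a semisimple object of C. -/
open CategoryTheory MonoidalCategory

/-- An object `X` of a category is *semisimple* if every monomorphism into `X` is a
split monomorphism. -/
def IsSemisimpleObj {C : Type*} [Category C] (X : C) : Prop :=
  ∀ ⦃Z : C⦄ (f : Z ⟶ X), Mono f → IsSplitMono f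

/-- **Serre theorem, part 1.** Let `(C, ⊗, I)` be a monoidal category and `X`, `Y` objects
such that `X ⊗ Y` is semisimple.  If `Y` has a strong right dual (an object `Y'` together
with a split mono `I ⟶ Y ⊗ Y'`) and the functor `- ⊗ Y` preserves monomorphisms, then `X`
is semisimple. -/
theorem serre_left_of_strong_right_dual {C : Type*} [Category C] [MonoidalCategory C]
    (X Y : C) (hss : IsSemisimpleObj (X ⊗ Y))
    (hdual : ∃ (Y' : C) (i : 𝟙_ C ⟶ Y ⊗ Y'), IsSplitMono i)
    (hmono : ∀ ⦃A B : C⦄ (f : A ⟶ B), Mono f → Mono (f ▷ Y)) :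
    IsSemisimpleObj X := by
  obtain ⟨Y', i, hi⟩ := hdual
  intro Z f hf
  have hs : IsSplitMono (f ▷ Y) := hss (f ▷ Y) (hmono f hf)
  obtain ⟨⟨r, hr⟩⟩ := hs.exists_splitMono
  obtain ⟨⟨p, hp⟩⟩ := hi.exists_splitMono
  refine IsSplitMono.mk' ⟨(ρ_ X).inv ≫ X ◁ i ≫ (α_ X Y Y').inv ≫ r ▷ Y' ≫
    (α_ Z Y Y').hom ≫ Z ◁ p ≫ (ρ_ Z).hom, ?_⟩
  calc f ≫ (ρ_ X).inv ≫ X ◁ i ≫ (α_ X Y Y').inv ≫ r ▷ Y' ≫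
        (α_ Z Y Y').hom ≫ Z ◁ p ≫ (ρ_ Z).hom
      = (ρ_ Z).inv ≫ Z ◁ i ≫ (α_ Z Y Y').inv ≫ (f ▷ Y ≫ r) ▷ Y' ≫
        (α_ Z Y Y').hom ≫ Z ◁ p ≫ (ρ_ Z).hom := by
        rw [rightUnitor_inv_naturality_assoc, ← whisker_exchange_assoc,
          associator_inv_naturality_left_assoc, comp_whiskerRight_assoc]
    _ = (ρ_ Z).inv ≫ Z ◁ (i ≫ p) ≫ (ρ_ Z).hom := by
        rw [hr]; simp
    _ = 𝟙 Z := by rw [hp]; simp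
end

section
/- Let (C, ⊗, I) be a monoidal category and let C, D be objects of C such that C ⊗ D is a semisimple object. If C has a strong left dual (i.e. there exists an object C* and a split monomorphism i_C : I → C* ⊗ C) and the functor C ⊗ − : C → C preserves monomorphisms, then D is a semisimple object of C. -/
open CategoryTheory MonoidalCategory

/-- **Serre theorem, part 2.** Let `(C, ⊗, I)` be a monoidal category and `X`, `Y` objects
such that `X ⊗ Y` is semisimple.  If `X` has a strong left dual (an object `X'` together
with a split mono `I ⟶ X' ⊗ X`) and the functor `X ⊗ -` preserves monomorphisms, then `Y`
is semisimple. -/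
theorem serre_right_of_strong_left_dual {C : Type*} [Category C] [MonoidalCategory C]
    (X Y : C) (hss : IsSemisimpleObj (X ⊗ Y))
    (hdual : ∃ (X' : C) (i : 𝟙_ C ⟶ X' ⊗ X), IsSplitMono i)
    (hmono : ∀ ⦃A B : C⦄ (f : A ⟶ B), Mono f → Mono (X ◁ f)) :
    IsSemisimpleObj Y := by
  obtain ⟨X', i, hi⟩ := hdual
  intro Z f hf
  have hs : IsSplitMono (X ◁ f) := hss _ (hmono f hf)
  obtain ⟨⟨p, hp⟩⟩ := hi.exists_splitMono
  obtain ⟨⟨g, hg⟩⟩ := hs.exists_splitMono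
  refine IsSplitMono.mk' ⟨(λ_ Y).inv ≫ i ▷ Y ≫ (α_ X' X Y).hom ≫ X' ◁ g ≫
    (α_ X' X Z).inv ≫ p ▷ Z ≫ (λ_ Z).hom, ?_⟩
  have h1 : f ≫ (λ_ Y).inv ≫ i ▷ Y ≫ (α_ X' X Y).hom =
      (λ_ Z).inv ≫ i ▷ Z ≫ (α_ X' X Z).hom ≫ X' ◁ (X ◁ f) := by
    rw [leftUnitor_inv_naturality_assoc, whisker_exchange_assoc]
    simp
  have h2 : X' ◁ (X ◁ f) ≫ X' ◁ g = 𝟙 _ := by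
    rw [← whiskerLeft_comp, hg, whiskerLeft_id]
  have h3 : i ▷ Z ≫ p ▷ Z = 𝟙 _ := by
    rw [← comp_whiskerRight, hp, id_whiskerRight]
  have h1' := h1 =≫ (X' ◁ g ≫ (α_ X' X Z).inv ≫ p ▷ Z ≫ (λ_ Z).hom)
  simp only [Category.assoc] at h1'
  rw [h1', reassoc_of% h2, Iso.hom_inv_id_assoc, reassoc_of% h3, Iso.inv_hom_id]
end

section
/- Let (C, ⊗, I) be a monoidal category such that every object of C has a strong left dual and a strong right dual, and such that for every object C the functors C ⊗ − : C → C and − ⊗ C : C → C preserve monomorphisms. Then C is a Serre category: for any objects C, D of C such that C ⊗ D is a semisimple object, both C and D are semisimple objects of C. -/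
open CategoryTheory MonoidalCategory

/-- A monoidal category is a *Serre category* if whenever `X ⊗ Y` is a semisimple object,
both `X` and `Y` are semisimple objects. -/
def IsSerreCategory (C : Type*) [Category C] [MonoidalCategory C] : Prop :=
  ∀ (X Y : C), IsSemisimpleObj (X ⊗ Y) → IsSemisimpleObj X ∧ IsSemisimpleObj Y

/-- **Serre theorem.** If in a monoidal category every object has a strong left dual and a
strong right dual (i.e. for every `D` there are split monos `I ⟶ D ⊗ D*` and
`I ⟶ D* ⊗ D`), and tensoring on either side by any object preserves monomorphisms, then
the category is a Serre category. -/
theorem isSerreCategory_of_strong_duals {C : Type*} [Category C] [MonoidalCategory C]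
    (hrdual : ∀ D : C, ∃ (D' : C) (i : 𝟙_ C ⟶ D ⊗ D'), IsSplitMono i)
    (hldual : ∀ D : C, ∃ (D' : C) (i : 𝟙_ C ⟶ D' ⊗ D), IsSplitMono i)
    (hmonoR : ∀ (D : C) ⦃A B : C⦄ (f : A ⟶ B), Mono f → Mono (f ▷ D))
    (hmonoL : ∀ (D : C) ⦃A B : C⦄ (f : A ⟶ B), Mono f → Mono (D ◁ f)) :
    IsSerreCategory C := by
  intro X Y h
  constructor
  · intro Z f hf
    obtain ⟨Y', i, ⟨⟨r, hr⟩⟩⟩ := hrdual Y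
    obtain ⟨⟨g, hg⟩⟩ := h (f ▷ Y) (hmonoR Y f hf)
    refine ⟨⟨(ρ_ X).inv ≫ X ◁ i ≫ (α_ X Y Y').inv ≫ g ▷ Y' ≫ (α_ Z Y Y').hom ≫
      Z ◁ r ≫ (ρ_ Z).hom, ?_⟩⟩
    have h1 : f ≫ (ρ_ X).inv = (ρ_ Z).inv ≫ f ▷ 𝟙_ C := by simp
    have h2 : f ▷ (Y ⊗ Y') ≫ (α_ X Y Y').inv = (α_ Z Y Y').inv ≫ (f ▷ Y) ▷ Y' := by simp
    have h3 : (f ▷ Y) ▷ Y' ≫ g ▷ Y' = 𝟙 _ := by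
      rw [← comp_whiskerRight, hg, id_whiskerRight]
    have h4 : Z ◁ i ≫ Z ◁ r = 𝟙 _ := by
      rw [← whiskerLeft_comp, hr, whiskerLeft_id]
    rw [reassoc_of% h1, ← whisker_exchange_assoc, reassoc_of% h2, reassoc_of% h3,
      Iso.inv_hom_id_assoc, reassoc_of% h4, Iso.inv_hom_id]
  · intro Z f hf
    obtain ⟨X', i, ⟨⟨r, hr⟩⟩⟩ := hldual X
    obtain ⟨⟨g, hg⟩⟩ := h (X ◁ f) (hmonoL X f hf)
    refine ⟨⟨(λ_ Y).inv ≫ i ▷ Y ≫ (α_ X' X Y).hom ≫ X' ◁ g ≫ (α_ X' X Z).inv ≫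
      r ▷ Z ≫ (λ_ Z).hom, ?_⟩⟩
    have h1 : f ≫ (λ_ Y).inv = (λ_ Z).inv ≫ 𝟙_ C ◁ f := by simp
    have h2 : (X' ⊗ X) ◁ f ≫ (α_ X' X Y).hom = (α_ X' X Z).hom ≫ X' ◁ (X ◁ f) := by simp
    have h3 : X' ◁ (X ◁ f) ≫ X' ◁ g = 𝟙 _ := by
      rw [← whiskerLeft_comp, hg, whiskerLeft_id]
    have h4 : i ▷ Z ≫ r ▷ Z = 𝟙 _ := by
      rw [← comp_whiskerRight, hr, id_whiskerRight]
    rw [reassoc_of% h1, whisker_exchange_assoc, reassoc_of% h2, reassoc_of% h3,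
      Iso.hom_inv_id_assoc, reassoc_of% h4, Iso.inv_hom_id]
end

section
/- Let k be a commutative ring, H an involutory Hopf algebra over k, and N a right H-comodule that is finitely generated projective as a k-module whose Hattori–Stallings rank r_k(N) is invertible in k. Then N*, with the coaction determined by f_{⟨1⟩} f_{⟨0⟩}(n) = S(n_{⟨1⟩}) f(n_{⟨0⟩}), is both a strong right dual and a strong left dual of N in the monoidal category of right H-comodules: the maps i_N : k → N ⊗ N*, a ↦ a Σ_i e_i ⊗ e_i*, and j_N : k → N* ⊗ N, a ↦ a Σ_i e_i* ⊗ e_i, are split monomorphisms of right H-comodules, with H-colinear retractions r_k(N)^{-1} ev_N and r_k(N)^{-1} ev'_N respectively. -/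
open TensorProduct LinearMap

variable {k H : Type*} [CommRing k] [Ring H] [HopfAlgebra k H]

/-- A `k`-linear map `ρ : M → M ⊗ H` is a (coassociative, counital) right `H`-coaction,
i.e. it makes `M` a right `H`-comodule. -/
def IsCoaction {M : Type*} [AddCommGroup M] [Module k M] (ρ : M →ₗ[k] M ⊗[k] H) : Prop :=
  (LinearMap.rTensor H ρ ∘ₗ ρ =
      (TensorProduct.assoc k M H H).symm.toLinearMap ∘ₗ
        LinearMap.lTensor M (Coalgebra.comul (R := k)) ∘ₗ ρ) ∧
    ((TensorProduct.rid k M).toLinearMap ∘ₗ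
        LinearMap.lTensor M (Coalgebra.counit (R := k)) ∘ₗ ρ = LinearMap.id)

/-- The codiagonal coaction on the tensor product of two right `H`-comodules:
`m ⊗ n ↦ m⁽⁰⁾ ⊗ n⁽⁰⁾ ⊗ m⁽¹⁾ n⁽¹⁾`. -/
noncomputable def codiag {M N : Type*} [AddCommGroup M] [Module k M] [AddCommGroup N]
    [Module k N] (ρM : M →ₗ[k] M ⊗[k] H) (ρN : N →ₗ[k] N ⊗[k] H) :
    M ⊗[k] N →ₗ[k] (M ⊗[k] N) ⊗[k] H :=
  LinearMap.lTensor (M ⊗[k] N) (LinearMap.mul' k H) ∘ₗ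
    (TensorProduct.tensorTensorTensorComm k M H N H).toLinearMap ∘ₗ TensorProduct.map ρM ρN


/-- Expansion of a tensor along a dual basis. -/
theorem expand_dual_basis {M : Type*} [AddCommGroup M] [Module k M] (n : ℕ) (e : Fin n → M)
    (φ : Fin n → M →ₗ[k] k) (h : ∀ x : M, ∑ i, φ i x • e i = x) (t : M ⊗[k] H) :
    t = ∑ i, e i ⊗ₜ[k] (TensorProduct.lid k H) (TensorProduct.map (φ i) LinearMap.id t) := by
  induction t using TensorProduct.induction_on with
  | zero => simp
  | tmul x y =>
    conv_lhs => rw [← h x]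
    simp [TensorProduct.sum_tmul, TensorProduct.smul_tmul]
  | add a b ha hb =>
    conv_lhs => rw [ha, hb]
    simp [TensorProduct.tmul_add, Finset.sum_add_distrib]

theorem codiag_sum {M N : Type*} [AddCommGroup M] [Module k M] [AddCommGroup N]
    [Module k N] (ρM : M →ₗ[k] M ⊗[k] H) (ρN : N →ₗ[k] N ⊗[k] H) (n : ℕ)
    (e : Fin n → M) (f : Fin n → N) (x : M) (y : N) (a b : Fin n → H)
    (hx : ρM x = ∑ i, e i ⊗ₜ[k] a i) (hy : ρN y = ∑ i, f i ⊗ₜ[k] b i) :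
    codiag ρM ρN (x ⊗ₜ[k] y) = ∑ i, ∑ j, (e i ⊗ₜ[k] f j) ⊗ₜ[k] (a i * b j) := by
  simp [codiag, hx, hy, TensorProduct.sum_tmul, TensorProduct.tmul_sum]
  try rw [Finset.sum_comm]

/-- The abstract matrix computation for the coevaluation. -/
theorem coev_aux {M N : Type*} [AddCommGroup M] [Module k M] [AddCommGroup N]
    [Module k N] (ρM : M →ₗ[k] M ⊗[k] H) (ρN : N →ₗ[k] N ⊗[k] H) (n : ℕ)
    (e : Fin n → M) (f : Fin n → N) (a b : Fin n → Fin n → H) (c : Fin n → Fin n → k)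
    (hx : ∀ j, ρM (e j) = ∑ i, e i ⊗ₜ[k] a i j) (hy : ∀ j, ρN (f j) = ∑ i, f i ⊗ₜ[k] b j i)
    (hab : ∀ i j, ∑ l, a i l * b l j = c i j • (1 : H))
    (hc : ∀ j, ∑ i, c i j • e i = e j) :
    codiag ρM ρN ∘ₗ LinearMap.toSpanSingleton k (M ⊗[k] N) (∑ i, e i ⊗ₜ[k] f i) =
      LinearMap.rTensor H
          (LinearMap.toSpanSingleton k (M ⊗[k] N) (∑ i, e i ⊗ₜ[k] f i)) ∘ₗ
        (TensorProduct.mk k k H).flip 1 := by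
  apply LinearMap.ext_ring
  simp only [LinearMap.comp_apply, LinearMap.toSpanSingleton_apply, one_smul, map_sum,
    LinearMap.flip_apply, TensorProduct.mk_apply, LinearMap.rTensor_tmul]
  have : ∀ l, codiag ρM ρN (e l ⊗ₜ[k] f l) =
      ∑ i, ∑ j, (e i ⊗ₜ[k] f j) ⊗ₜ[k] (a i l * b l j) := fun l =>
    codiag_sum ρM ρN n e f _ _ (fun i => a i l) (fun j => b l j) (hx l) (hy l)
  simp only [this]
  rw [Finset.sum_comm]
  have h2 : ∀ i, ∑ l, ∑ j, (e i ⊗ₜ[k] f j) ⊗ₜ[k] (a i l * b l j) =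
      ∑ j, ((c i j • e i) ⊗ₜ[k] f j) ⊗ₜ[k] (1 : H) := by
    intro i
    rw [Finset.sum_comm]
    refine Finset.sum_congr rfl fun j _ => ?_
    rw [← TensorProduct.tmul_sum, hab, TensorProduct.tmul_smul, TensorProduct.smul_tmul',
      TensorProduct.smul_tmul']
  simp only [h2]
  rw [Finset.sum_comm, TensorProduct.sum_tmul]
  refine Finset.sum_congr rfl fun j _ => ?_
  rw [← TensorProduct.sum_tmul, ← TensorProduct.sum_tmul, hc]

/-- The abstract matrix computation for the evaluation. -/
theorem ev_aux {M N : Type*} [AddCommGroup M] [Module k M] [AddCommGroup N]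
    [Module k N] (ρM : M →ₗ[k] M ⊗[k] H) (ρN : N →ₗ[k] N ⊗[k] H) (n : ℕ)
    (e : Fin n → M) (f : Fin n → N) (a b : Fin n → Fin n → H) (E : M ⊗[k] N →ₗ[k] k) (u : kˣ)
    (he : Submodule.span k (Set.range e) = ⊤) (hf : Submodule.span k (Set.range f) = ⊤)
    (hx : ∀ j, ρM (e j) = ∑ i, e i ⊗ₜ[k] a i j) (hy : ∀ j, ρN (f j) = ∑ i, f i ⊗ₜ[k] b j i)
    (hb : ∀ i l, ∑ j, E (e i ⊗ₜ[k] f j) • b l j = b l i)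
    (hab : ∀ p q, ∑ i, a i p * b q i = E (e p ⊗ₜ[k] f q) • (1 : H)) :
    (TensorProduct.mk k k H).flip 1 ∘ₗ (u • E) = LinearMap.rTensor H (u • E) ∘ₗ codiag ρM ρN := by
  apply TensorProduct.ext
  refine LinearMap.ext_on_range he fun p => ?_
  refine LinearMap.ext_on_range hf fun q => ?_
  have := codiag_sum ρM ρN n e f _ _ (fun i => a i p) (fun j => b q j) (hx p) (hy q)
  change (TensorProduct.mk k k H).flip 1 ((u • E) (e p ⊗ₜ[k] f q)) =
    LinearMap.rTensor H (u • E) (codiag ρM ρN (e p ⊗ₜ[k] f q))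
  simp only [TensorProduct.mk_apply, this,
    map_sum, LinearMap.rTensor_tmul, LinearMap.flip_apply, LinearMap.smul_apply]
  have h2 : ∀ i j, (u • E (e i ⊗ₜ[k] f j)) ⊗ₜ[k] (a i p * b q j) =
      (u • (1 : k)) ⊗ₜ[k] (a i p * (E (e i ⊗ₜ[k] f j) • b q j)) := by
    intro i j
    rw [mul_smul_comm, ← TensorProduct.smul_tmul]
    congr 1
    simp [Units.smul_def, mul_comm]
  simp only [h2, ← TensorProduct.tmul_sum, ← Finset.mul_sum, hb, hab]
  rw [← TensorProduct.smul_tmul]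
  congr 1
  simp [Units.smul_def, mul_comm]

/-- **Strong duality for comodules over an involutory Hopf algebra.**  Let `H` be an
involutory Hopf algebra over a commutative ring `k` and `N` a right `H`-comodule (with
coaction `ρ`), finitely generated projective over `k` with canonical element
`∑ i, e i ⊗ ε i` and invertible Hattori–Stallings rank `r = ∑ i, ε i (e i)`.  Then `N*`,
with the coaction `σ` determined by `f⁽¹⁾ f⁽⁰⁾(x) = S(x⁽¹⁾) f(x⁽⁰⁾)`, is a strong right
and strong left dual of `N` in the category of right `H`-comodules: the maps
`i_N : k → N ⊗ N*` and `j_N : k → N* ⊗ N` are `H`-colinear split monomorphisms, with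
`H`-colinear retractions `r⁻¹ • ev_N` and `r⁻¹ • ev'_N` respectively. -/
theorem strong_dual_of_comodule {N : Type*} [AddCommGroup N] [Module k N]
    (hinv : ∀ h : H, HopfAlgebra.antipode (R := k) (HopfAlgebra.antipode (R := k) h) = h)
    (ρ : N →ₗ[k] N ⊗[k] H) (hρ : IsCoaction ρ)
    (n : ℕ) (e : Fin n → N) (ε : Fin n → Module.Dual k N)
    (hdb1 : ∀ x : N, ∑ i, ε i x • e i = x)
    (hdb2 : ∀ f : Module.Dual k N, ∑ i, f (e i) • ε i = f)
    (hr : IsUnit (∑ i, ε i (e i)))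
    (σ : Module.Dual k N →ₗ[k] Module.Dual k N ⊗[k] H) (hσ : IsCoaction σ)
    (hσchar : ∀ (f : Module.Dual k N) (x : N),
      (TensorProduct.lid k H)
          (TensorProduct.map (Module.Dual.eval k N x) LinearMap.id (σ f)) =
        (TensorProduct.lid k H)
          (TensorProduct.map f (HopfAlgebra.antipode (R := k)) (ρ x))) :
    -- `i_N` is `H`-colinear (`k` carries the trivial coaction `a ↦ a ⊗ 1`)
    (codiag ρ σ ∘ₗ
        LinearMap.toSpanSingleton k (N ⊗[k] Module.Dual k N) (∑ i, e i ⊗ₜ[k] ε i) =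
      LinearMap.rTensor H
          (LinearMap.toSpanSingleton k (N ⊗[k] Module.Dual k N) (∑ i, e i ⊗ₜ[k] ε i)) ∘ₗ
        (TensorProduct.mk k k H).flip 1) ∧
    -- the retraction `r⁻¹ • ev_N` is `H`-colinear
    ((TensorProduct.mk k k H).flip 1 ∘ₗ ((hr.unit⁻¹ : kˣ) • contractRight k N) =
      LinearMap.rTensor H ((hr.unit⁻¹ : kˣ) • contractRight k N) ∘ₗ codiag ρ σ) ∧
    -- `r⁻¹ • ev_N` is a retraction of `i_N`, so `i_N` is a split mono of `H`-comodules
    (((hr.unit⁻¹ : kˣ) • contractRight k N) ∘ₗ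
        LinearMap.toSpanSingleton k (N ⊗[k] Module.Dual k N) (∑ i, e i ⊗ₜ[k] ε i) =
      LinearMap.id) ∧
    -- `j_N` is `H`-colinear
    (codiag σ ρ ∘ₗ
        LinearMap.toSpanSingleton k (Module.Dual k N ⊗[k] N) (∑ i, ε i ⊗ₜ[k] e i) =
      LinearMap.rTensor H
          (LinearMap.toSpanSingleton k (Module.Dual k N ⊗[k] N) (∑ i, ε i ⊗ₜ[k] e i)) ∘ₗ
        (TensorProduct.mk k k H).flip 1) ∧
    -- the retraction `r⁻¹ • ev'_N` is `H`-colinear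
    ((TensorProduct.mk k k H).flip 1 ∘ₗ ((hr.unit⁻¹ : kˣ) • contractLeft k N) =
      LinearMap.rTensor H ((hr.unit⁻¹ : kˣ) • contractLeft k N) ∘ₗ codiag σ ρ) ∧
    -- `r⁻¹ • ev'_N` is a retraction of `j_N`, so `j_N` is a split mono of `H`-comodules
    (((hr.unit⁻¹ : kˣ) • contractLeft k N) ∘ₗ
        LinearMap.toSpanSingleton k (Module.Dual k N ⊗[k] N) (∑ i, ε i ⊗ₜ[k] e i) =
      LinearMap.id) := by
  have hS := fun a b : H => HopfAlgebra.antipode_mul_antidistrib (R := k) a b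
  obtain ⟨h, hh⟩ : ∃ h : Fin n → Fin n → H, ∀ i j, h i j =
    (TensorProduct.lid k H) (TensorProduct.map (ε i) LinearMap.id (ρ (e j))) := ⟨_, fun _ _ => rfl⟩
  have hρe : ∀ j, ρ (e j) = ∑ i, e i ⊗ₜ[k] h i j := by
    intro j
    simp only [hh]
    exact expand_dual_basis n e ε hdb1 _
  have hσe : ∀ j, σ (ε j) = ∑ i, ε i ⊗ₜ[k] HopfAlgebra.antipode k (h j i) := by
    intro j
    rw [expand_dual_basis n ε (fun i => Module.Dual.eval k N (e i)) (fun f => hdb2 f) (σ (ε j))]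
    refine Finset.sum_congr rfl fun i _ => ?_
    rw [hσchar, hh]
    congr 1
    generalize ρ (e i) = t
    induction t using TensorProduct.induction_on with
    | zero => simp
    | tmul x y => simp
    | add a b ha hb => simp only [map_add, ha, hb]
  -- relations among the matrix coefficients
  have hr1 : ∀ i j, ∑ l, ε i (e l) • h l j = h i j := by
    intro i j
    rw [hh i j, hρe j]
    simp
  have hr2 : ∀ i j, ∑ l, ε l (e j) • h i l = h i j := by
    intro i j
    rw [hh i j]
    conv_rhs => rw [← hdb1 (e j)]
    simp [hh]
  have hcounit : ∀ i j, Coalgebra.counit (R := k) (h i j) = ε i (e j) := by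
    intro i j
    have := congrArg (ε i) (LinearMap.congr_fun hρ.2 (e j))
    simp [hρe] at this
    rw [← this, ← hr1 i j]
    simp [mul_comm]
  have hcomul : ∀ i j, Coalgebra.comul (R := k) (h i j) = ∑ l, h i l ⊗ₜ[k] h l j := by
    intro i j
    have := congrArg (fun t => TensorProduct.lid k (H ⊗[k] H)
      (TensorProduct.map (ε i) LinearMap.id (TensorProduct.assoc k N H H t)))
      (LinearMap.congr_fun hρ.1 (e j))
    simp [hρe, TensorProduct.sum_tmul] at this
    conv_lhs => rw [← hr1 i j]
    simp only [map_sum, map_smul]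
    rw [← this]
    refine Finset.sum_congr rfl fun l _ => ?_
    conv_rhs => rw [← hr1 i l]
    simp [TensorProduct.sum_tmul, TensorProduct.smul_tmul']
  have h1 : ∀ i j, ∑ l, h i l * HopfAlgebra.antipode k (h l j) = ε i (e j) • (1 : H) := by
    intro i j
    have := HopfAlgebra.mul_antipode_lTensor_comul_apply (R := k) (h i j)
    simpa [hcomul, hcounit, Algebra.algebraMap_eq_smul_one] using this
  have h2 : ∀ i j, ∑ l, HopfAlgebra.antipode k (h i l) * h l j = ε i (e j) • (1 : H) := by
    intro i j
    have := HopfAlgebra.mul_antipode_rTensor_comul_apply (R := k) (h i j)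
    simpa [hcomul, hcounit, Algebra.algebraMap_eq_smul_one] using this
  have h3 : ∀ i j, ∑ l, h l j * HopfAlgebra.antipode k (h i l) = ε i (e j) • (1 : H) := by
    intro i j
    have := congrArg (HopfAlgebra.antipode k) (h1 i j)
    simpa [hS, hinv] using this
  have h4 : ∀ i j, ∑ l, HopfAlgebra.antipode k (h l j) * h i l = ε i (e j) • (1 : H) := by
    intro i j
    have := congrArg (HopfAlgebra.antipode k) (h2 i j)
    simpa [hS, hinv] using this
  have he : Submodule.span k (Set.range e) = ⊤ := by
    rw [eq_top_iff]
    intro x _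
    rw [← hdb1 x]
    exact Submodule.sum_mem _ fun i _ => Submodule.smul_mem _ _ (Submodule.subset_span ⟨i, rfl⟩)
  have hε : Submodule.span k (Set.range ε) = ⊤ := by
    rw [eq_top_iff]
    intro x _
    rw [← hdb2 x]
    exact Submodule.sum_mem _ fun i _ => Submodule.smul_mem _ _ (Submodule.subset_span ⟨i, rfl⟩)
  refine ⟨?_, ?_, ?_, ?_, ?_, ?_⟩
  · exact coev_aux ρ σ n e ε h (fun i j => HopfAlgebra.antipode k (h i j))
      (fun i j => ε i (e j)) hρe hσe h1 (fun j => hdb1 (e j))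
  · refine ev_aux ρ σ n e ε h (fun i j => HopfAlgebra.antipode k (h i j)) _ _ he hε hρe hσe ?_ ?_
    · intro i l
      simp only [contractRight_apply, ← map_smul, ← map_sum, hr2]
    · intro p q
      simp only [contractRight_apply, h3]
  · apply LinearMap.ext_ring
    simp [Units.smul_def]
  · refine coev_aux σ ρ n ε e (fun i j => HopfAlgebra.antipode k (h j i)) (fun i j => h j i)
      (fun i j => ε j (e i)) hσe hρe (fun i j => h4 j i) (fun j => hdb2 (ε j))
  · refine ev_aux σ ρ n ε e (fun i j => HopfAlgebra.antipode k (h j i)) (fun i j => h j i) _ _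
      hε he hσe hρe ?_ ?_
    · intro i l
      simp only [contractLeft_apply, hr1]
    · intro p q
      simp only [contractLeft_apply, h2]
  · apply LinearMap.ext_ring
    simp [Units.smul_def]
end
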